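/- Let k be a natural number and let C be an s-extremal singly even self-dual [24k+20, 12k+10, 4k+4] code (so C is also extremal). Then both neighbors N₁(C) = C₀ ∪ C₁ and N₃(C) = C₀ ∪ C₃ of C are also s-extremal singly even self-dual [24k+20, 12k+10, 4k+4] codes (i.e., each is singly even self-dual with minimum weight 4k+4, and its shadow has minimum weight 4k+6). -/

import Mathlib

open Finset

/-- Hamming weight of a binary vector. -/
def wt {n : ℕ} (x : Fin n → ZMod 2) : ℕ := hammingNorm x

/-- The dual of a set of binary vectors with respect to the standard inner product. -/
def dualSet {n : ℕ} (C : Set (Fin n → ZMod 2)) : Set (Fin n → ZMod 2) :=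
  {x | ∀ y ∈ C, ∑ i, x i * y i = 0}

/-- A binary linear code is self-dual if it equals its dual code. -/
def IsSelfDual {n : ℕ} (C : Submodule (ZMod 2) (Fin n → ZMod 2)) : Prop :=
  (C : Set (Fin n → ZMod 2)) = dualSet (C : Set (Fin n → ZMod 2))

/-- A self-dual code is singly even if some codeword has weight not divisible by 4. -/
def IsSinglyEvenSelfDual {n : ℕ} (C : Submodule (ZMod 2) (Fin n → ZMod 2)) : Prop :=
  IsSelfDual C ∧ ∃ x ∈ C, ¬ (4 ∣ wt x)

/-- The doubly even subcode `C₀` of `C` (as a set): codewords of weight ≡ 0 (mod 4). -/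
def evenSub {n : ℕ} (C : Submodule (ZMod 2) (Fin n → ZMod 2)) : Set (Fin n → ZMod 2) :=
  {x | x ∈ C ∧ 4 ∣ wt x}

/-- The shadow `S = C₀^⊥ \ C` of a singly even self-dual code. -/
def shadow {n : ℕ} (C : Submodule (ZMod 2) (Fin n → ZMod 2)) : Set (Fin n → ZMod 2) :=
  dualSet (evenSub C) \ (C : Set (Fin n → ZMod 2))

/-- The minimum (nonzero) weight of a set of vectors. -/
noncomputable def minWtSet {n : ℕ} (S : Set (Fin n → ZMod 2)) : ℕ :=
  sInf {w | ∃ x ∈ S, x ≠ 0 ∧ wt x = w}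

/-- The minimum weight of a code. -/
noncomputable def minWt {n : ℕ} (C : Submodule (ZMod 2) (Fin n → ZMod 2)) : ℕ :=
  minWtSet (C : Set (Fin n → ZMod 2))

/-- A singly even self-dual code of length `n` is s-extremal if
`d(S) = n/2 + 4 - 2 d(C)`. -/
def IsSExtremal {n : ℕ} (C : Submodule (ZMod 2) (Fin n → ZMod 2)) : Prop :=
  IsSinglyEvenSelfDual C ∧
    (minWtSet (shadow C) : ℤ) = ((n / 2 : ℕ) : ℤ) + 4 - 2 * (minWt C : ℤ)

/-- Two codes are equivalent if one is obtained from the other by permuting coordinates. -/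
def CodeEquiv {n : ℕ} (C D : Submodule (ZMod 2) (Fin n → ZMod 2)) : Prop :=
  ∃ σ : Equiv.Perm (Fin n),
    Submodule.map (LinearMap.funLeft (ZMod 2) (ZMod 2) σ) C = D

/-- The neighbor `C₀ ∪ (t + C₀)` of `C` obtained from a shadow vector `t`:
the span of the doubly even subcode together with `t`. -/
def neighborCode {n : ℕ} (C : Submodule (ZMod 2) (Fin n → ZMod 2))
    (t : Fin n → ZMod 2) : Submodule (ZMod 2) (Fin n → ZMod 2) :=
  Submodule.span (ZMod 2) (evenSub C ∪ {t})


lemma zb (a : ZMod 2) : a = 0 ∨ a = 1 := by revert a; decide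

lemma zb' {a : ZMod 2} (h : a ≠ 0) : a = 1 := (zb a).resolve_left h

lemma wt_eq {n : ℕ} (x : Fin n → ZMod 2) : wt x = ∑ i, (x i).val := by
  unfold wt hammingNorm
  rw [Finset.card_filter]
  apply Finset.sum_congr rfl
  intro i _
  rcases zb (x i) with h | h <;> rw [h] <;> simp
  rfl

/-- overlap -/
def ov {n : ℕ} (x y : Fin n → ZMod 2) : ℕ := ∑ i, (x i * y i).val

lemma wt_add {n : ℕ} (x y : Fin n → ZMod 2) : wt (x + y) + 2 * ov x y = wt x + wt y := by
  simp only [wt_eq, ov, Finset.mul_sum, ← Finset.sum_add_distrib]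
  apply Finset.sum_congr rfl
  intro i _
  simp only [Pi.add_apply]
  generalize x i = a
  generalize y i = b
  revert a b; decide

lemma ov_cast {n : ℕ} (x y : Fin n → ZMod 2) : ((ov x y : ℕ) : ZMod 2) = x ⬝ᵥ y := by
  simp [ov, dotProduct]

lemma ov_even {n : ℕ} {x y : Fin n → ZMod 2} (h : x ⬝ᵥ y = 0) : ov x y % 2 = 0 := by
  rw [← ov_cast, ZMod.natCast_eq_zero_iff] at h
  omega

lemma ov_odd {n : ℕ} {x y : Fin n → ZMod 2} (h : x ⬝ᵥ y = 1) : ov x y % 2 = 1 := by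
  by_contra hc
  have : ((ov x y : ℕ) : ZMod 2) = 0 := by
    rw [ZMod.natCast_eq_zero_iff]; omega
  rw [ov_cast, h] at this
  exact one_ne_zero this

lemma wt_cast {n : ℕ} (x : Fin n → ZMod 2) : ((wt x : ℕ) : ZMod 2) = x ⬝ᵥ x := by
  rw [wt_eq, dotProduct, Nat.cast_sum]
  apply Finset.sum_congr rfl
  intro i _
  generalize x i = a
  revert a; decide

lemma wt_cast_one {n : ℕ} (x : Fin n → ZMod 2) : ((wt x : ℕ) : ZMod 2) = 1 ⬝ᵥ x := by
  rw [wt_eq, dotProduct, Nat.cast_sum]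
  apply Finset.sum_congr rfl
  intro i _
  simp

lemma add_self2 {n : ℕ} (x : Fin n → ZMod 2) : x + x = 0 := by
  ext i; exact CharTwo.add_self_eq_zero _

lemma add_add_self2 {n : ℕ} (x y : Fin n → ZMod 2) : x + y + y = x := by
  rw [add_assoc, add_self2, add_zero]

lemma wt_compl {n : ℕ} (x : Fin n → ZMod 2) : wt (x + 1) + wt x = n := by
  simp only [wt_eq, ← Finset.sum_add_distrib]
  trans ∑ i : Fin n, 1
  · apply Finset.sum_congr rfl
    intro i _
    simp only [Pi.add_apply, Pi.one_apply]
    generalize x i = a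
    revert a; decide
  · simp

section codes
variable {n : ℕ} {C : Submodule (ZMod 2) (Fin n → ZMod 2)}

lemma sd_mem (h : IsSelfDual C) {x : Fin n → ZMod 2} : x ∈ C ↔ ∀ y ∈ C, x ⬝ᵥ y = 0 := by
  have := Set.ext_iff.mp h x
  exact this

lemma sd_dot (h : IsSelfDual C) {x y : Fin n → ZMod 2} (hx : x ∈ C) (hy : y ∈ C) :
    x ⬝ᵥ y = 0 := (sd_mem h).1 hx y hy

lemma sd_even (h : IsSelfDual C) {x : Fin n → ZMod 2} (hx : x ∈ C) : wt x % 2 = 0 := by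
  have := sd_dot h hx hx
  rw [← wt_cast, ZMod.natCast_eq_zero_iff] at this
  omega

lemma sd_one (h : IsSelfDual C) : (1 : Fin n → ZMod 2) ∈ C := by
  rw [sd_mem h]
  intro y hy
  rw [← wt_cast_one, wt_cast]
  exact sd_dot h hy hy

lemma even_add (h : IsSelfDual C) {x y : Fin n → ZMod 2} (hx : x ∈ C) (hy : y ∈ C) :
    wt (x + y) % 4 = (wt x + wt y) % 4 := by
  have := wt_add x y
  have := ov_even (sd_dot h hx hy)
  omega

lemma mem_shadow {s : Fin n → ZMod 2} :
    s ∈ shadow C ↔ (∀ y ∈ C, 4 ∣ wt y → s ⬝ᵥ y = 0) ∧ s ∉ C := by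
  unfold _root_.shadow dualSet evenSub
  simp only [Set.mem_diff, Set.mem_setOf_eq, and_imp, SetLike.mem_coe]
  rfl

lemma shadow_dot (h : IsSelfDual C) {s x : Fin n → ZMod 2} (hs : s ∈ shadow C) (hx : x ∈ C)
    (hw : ¬ 4 ∣ wt x) : s ⬝ᵥ x = 1 := by
  rw [mem_shadow] at hs
  obtain ⟨h1, h2⟩ := hs
  rw [sd_mem h] at h2
  push Not at h2
  obtain ⟨y, hy, hyd⟩ := h2
  have hy4 : ¬ 4 ∣ wt y := fun h4 => hyd (h1 y hy h4)
  have e1 := even_add h hx hy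
  have e2 := sd_even h hx
  have e3 := sd_even h hy
  have := h1 (x + y) (C.add_mem hx hy) (by omega)
  rw [dotProduct_add, zb' hyd] at this
  rcases zb (s ⬝ᵥ x) with h0 | h0
  · rw [h0] at this; simp at this
  · exact h0

lemma shadow_add (h : IsSelfDual C) {s s' : Fin n → ZMod 2} (hs : s ∈ shadow C)
    (hs' : s' ∈ shadow C) : s + s' ∈ C := by
  rw [sd_mem h]
  intro y hy
  rw [add_dotProduct]
  by_cases hw : 4 ∣ wt y
  · rw [(mem_shadow.1 hs).1 y hy hw, (mem_shadow.1 hs').1 y hy hw, add_zero]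
  · rw [shadow_dot h hs hy hw, shadow_dot h hs' hy hw]; rfl

lemma shadow_add_code (h : IsSelfDual C) {s c : Fin n → ZMod 2} (hs : s ∈ shadow C)
    (hc : c ∈ C) : s + c ∈ shadow C := by
  have hs0 := hs
  rw [mem_shadow] at hs ⊢
  refine ⟨fun y hy hw => ?_, fun hm => hs.2 ?_⟩
  · rw [add_dotProduct, hs.1 y hy hw, sd_dot h hc hy, add_zero]
  · have := C.add_mem hm hc
    rwa [add_add_self2] at this

lemma shadow_wt (h : IsSelfDual C) {s s' : Fin n → ZMod 2} (hs : s ∈ shadow C)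
    (hs' : s' ∈ shadow C) : wt s % 4 = wt s' % 4 := by
  have hc := shadow_add h hs hs'
  have e : s + (s + s') = s' := by rw [← add_assoc, add_self2, zero_add]
  have e1 := wt_add s (s + s')
  rw [e] at e1
  have e2 := sd_even h hc
  by_cases hw : 4 ∣ wt (s + s')
  · have := ov_even ((mem_shadow.1 hs).1 _ hc hw)
    omega
  · have := ov_odd (shadow_dot h hs hc hw)
    omega

lemma sd_finrank (h : IsSelfDual C) : 2 * Module.finrank (ZMod 2) C = n := by
  let B : LinearMap.BilinForm (ZMod 2) (Fin n → ZMod 2) := dotProductBilin (ZMod 2) (ZMod 2)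
  have hB : ∀ x y, B x y = x ⬝ᵥ y := fun x y => rfl
  have hnd : B.Nondegenerate := by
    constructor
    · intro x hx
      ext i
      have := hx (Pi.single i 1)
      rwa [hB, dotProduct_single, mul_one] at this
    · intro x hx
      ext i
      have := hx (Pi.single i 1)
      rwa [hB, single_dotProduct, one_mul] at this
  have hr : B.IsRefl := fun x y hxy => by
    rw [hB] at hxy ⊢; rw [dotProduct_comm]; exact hxy
  have horth : B.orthogonal C = C := by
    ext x
    rw [LinearMap.BilinForm.mem_orthogonal_iff, sd_mem h]
    refine forall₂_congr fun y _ => ?_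
    change B y x = 0 ↔ _
    rw [hB, dotProduct_comm]
  have h1 := LinearMap.BilinForm.finrank_orthogonal hnd C
  have h2 := Submodule.finrank_le C
  rw [horth] at h1
  simp at h1 h2
  omega

end codes

lemma minWtSet_le {n : ℕ} {S : Set (Fin n → ZMod 2)} {x : Fin n → ZMod 2} (hx : x ∈ S)
    (h0 : x ≠ 0) : minWtSet S ≤ wt x := Nat.sInf_le ⟨x, hx, h0, rfl⟩

lemma minWtSet_att {n : ℕ} {S : Set (Fin n → ZMod 2)} (h : minWtSet S ≠ 0) :
    ∃ x ∈ S, x ≠ 0 ∧ wt x = minWtSet S := by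
  apply Nat.sInf_mem (s := {w | ∃ x ∈ S, x ≠ 0 ∧ wt x = w})
  by_contra hc
  rw [Set.not_nonempty_iff_eq_empty] at hc
  apply h
  unfold minWtSet
  rw [hc, Nat.sInf_empty]

lemma minWtSet_eq {n : ℕ} {S : Set (Fin n → ZMod 2)} {m : ℕ} {x : Fin n → ZMod 2} (hx : x ∈ S)
    (h0 : x ≠ 0) (hw : wt x = m) (hm : ∀ y ∈ S, y ≠ 0 → m ≤ wt y) : minWtSet S = m := by
  apply le_antisymm
  · exact hw ▸ minWtSet_le hx h0
  · have hne : {w | ∃ x ∈ S, x ≠ 0 ∧ wt x = w}.Nonempty := ⟨wt x, x, hx, h0, rfl⟩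
    apply le_csInf hne
    rintro _ ⟨y, hy, hy0, rfl⟩
    exact hm y hy hy0

/-- character -/
def chi {n : ℕ} (a x : Fin n → ZMod 2) : ℤ := if a ⬝ᵥ x = 0 then 1 else -1

lemma sgn_add (a b : ZMod 2) : (if a + b = 0 then (1 : ℤ) else -1) =
    (if a = 0 then 1 else -1) * (if b = 0 then 1 else -1) := by
  revert a b; decide

lemma chi_add_left {n : ℕ} (a b x : Fin n → ZMod 2) : chi (a + b) x = chi a x * chi b x := by
  simp only [chi, add_dotProduct, sgn_add]

lemma chi_add_right {n : ℕ} (a x y : Fin n → ZMod 2) : chi a (x + y) = chi a x * chi a y := by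
  simp only [chi, dotProduct_add, sgn_add]

/-- sum of the coordinate characters -/
def kr {n : ℕ} (x : Fin n → ZMod 2) : ℤ := ∑ i, chi (Pi.single i 1) x

lemma kr_eq {n : ℕ} (x : Fin n → ZMod 2) : kr x = n - 2 * wt x := by
  have : (n : ℤ) = ∑ i : Fin n, 1 := by simp
  rw [kr, wt_eq, Nat.cast_sum, Finset.mul_sum, this, ← Finset.sum_sub_distrib]
  apply Finset.sum_congr rfl
  intro i _
  simp only [chi, single_dotProduct, one_mul]
  generalize x i = a
  revert a; decide

lemma wt_single {n : ℕ} (i : Fin n) : wt (Pi.single i 1 : Fin n → ZMod 2) = 1 := by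
  rw [wt_eq, Finset.sum_eq_single i]
  · simp; rfl
  · intro j _ hj; simp [hj]
  · simp

/-- The design property: moments of low degree agree. -/
lemma moments {n : ℕ} (T₁ T₂ : Finset (Fin n → ZMod 2)) (m : ℕ)
    (h₁ : ∀ a, a ≠ 0 → wt a ≤ m → ∑ x ∈ T₁, chi a x = 0)
    (h₂ : ∀ a, a ≠ 0 → wt a ≤ m → ∑ x ∈ T₂, chi a x = 0)
    (ws : List ℤ) : ∀ a, wt a + ws.length ≤ m →
    (#T₂ : ℤ) * ∑ x ∈ T₁, chi a x * (ws.map (fun w => w + kr x)).prod =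
    (#T₁ : ℤ) * ∑ x ∈ T₂, chi a x * (ws.map (fun w => w + kr x)).prod := by
  induction ws with
  | nil =>
    intro a ha
    by_cases h0 : a = 0
    · subst h0; simp [chi, mul_comm]
    · simp only [List.map_nil, List.prod_nil, mul_one]
      rw [h₁ a h0 (by simpa using ha), h₂ a h0 (by simpa using ha)]; simp
  | cons w ws ih =>
    intro a ha
    have key : ∀ T : Finset (Fin n → ZMod 2),
        ∑ x ∈ T, chi a x * ((w :: ws).map (fun w => w + kr x)).prod =
        w * ∑ x ∈ T, chi a x * (ws.map (fun w => w + kr x)).prod +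
        ∑ i, ∑ x ∈ T, chi (a + Pi.single i 1) x * (ws.map (fun w => w + kr x)).prod := by
      intro T
      rw [Finset.sum_comm, Finset.mul_sum, ← Finset.sum_add_distrib]
      apply Finset.sum_congr rfl
      intro x _
      simp only [List.map_cons, List.prod_cons, chi_add_left]
      rw [← Finset.sum_mul, ← Finset.mul_sum, ← kr]
      ring
    simp only [List.length_cons] at ha
    rw [key, key, mul_add, mul_add, mul_left_comm, ih a (by omega), mul_left_comm,
      Finset.mul_sum (s := univ), Finset.mul_sum (s := univ)]
    congr 1
    apply Finset.sum_congr rfl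
    intro i _
    apply ih
    have := wt_add a (Pi.single i 1)
    rw [wt_single] at this
    omega

open Classical in
/-- Finset of shadow vectors. -/
noncomputable def shF {n : ℕ} (C : Submodule (ZMod 2) (Fin n → ZMod 2)) :
    Finset (Fin n → ZMod 2) := univ.filter (fun x => x ∈ shadow C)

lemma mem_shF {n : ℕ} {C : Submodule (ZMod 2) (Fin n → ZMod 2)} {x : Fin n → ZMod 2} :
    x ∈ shF C ↔ x ∈ shadow C := by simp [shF]

lemma shF_chi {n : ℕ} {C : Submodule (ZMod 2) (Fin n → ZMod 2)} (h : IsSelfDual C)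
    {a : Fin n → ZMod 2} (ha : a ∉ C) : ∑ x ∈ shF C, chi a x = 0 := by
  rw [sd_mem h] at ha
  push Not at ha
  obtain ⟨y, hy, hay⟩ := ha
  have e : ∑ x ∈ shF C, chi a x = ∑ x ∈ shF C, chi a (x + y) := by
    symm
    apply Finset.sum_bij' (fun x _ => x + y) (fun x _ => x + y)
    · intro x hx; rw [mem_shF] at hx ⊢; exact shadow_add_code h hx hy
    · intro x hx; rw [mem_shF] at hx ⊢; exact shadow_add_code h hx hy
    · intro x _; exact add_add_self2 x y
    · intro x _; exact add_add_self2 x y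
    · intro x _; rfl
  have hc : chi a y = -1 := by simp [chi, hay]
  simp only [chi_add_right, hc, mul_neg_one, Finset.sum_neg_distrib] at e
  omega

lemma exists_min {k : ℕ} {C N : Submodule (ZMod 2) (Fin (24 * k + 20) → ZMod 2)}
    (hC : IsSelfDual C) (hN : IsSelfDual N)
    (dC : ∀ x ∈ C, x ≠ 0 → 4 * k + 4 ≤ wt x) (dN : ∀ x ∈ N, x ≠ 0 → 4 * k + 4 ≤ wt x)
    (sC : ∀ x ∈ shadow C, 4 * k + 6 ≤ wt x ∧ wt x % 4 = 2)
    (sN : ∀ x ∈ shadow N, 4 * k + 6 ≤ wt x ∧ wt x % 4 = 2)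
    (hex : ∃ x ∈ shadow C, wt x = 4 * k + 6) (hne : ∃ x, x ∈ shadow N) :
    ∃ x ∈ shadow N, wt x = 4 * k + 6 := by
  let ws : List ℤ := (List.range (4 * k + 2)).map
    (fun j : ℕ => 2 * (4 * (k : ℤ) + 10 + 4 * (j : ℤ)) - (24 * k + 20))
  let P : (Fin (24 * k + 20) → ZMod 2) → ℤ := fun x => (ws.map (fun w => w + kr x)).prod
  have hP : ∀ x, P x = ((List.range (4 * k + 2)).map
      (fun j : ℕ => 2 * (4 * k + 10 + 4 * (j : ℤ) - wt x))).prod := by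
    intro x
    simp only [P, ws, List.map_map]
    congr 1
    apply List.map_congr_left
    intro j _
    simp only [Function.comp, kr_eq]
    push_cast
    ring
  have hpos : ∀ x, wt x = 4 * k + 6 → 0 < P x := by
    intro x hx
    rw [hP]
    apply List.prod_pos
    intro z hz
    simp only [List.mem_map, List.mem_range] at hz
    obtain ⟨j, _, rfl⟩ := hz
    omega
  have hzero : ∀ D : Submodule (ZMod 2) (Fin (24 * k + 20) → ZMod 2), IsSelfDual D →
      (∀ x ∈ shadow D, 4 * k + 6 ≤ wt x ∧ wt x % 4 = 2) →
      ∀ x ∈ shadow D, wt x ≠ 4 * k + 6 → P x = 0 := by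
    intro D hD sD x hx hw
    have h1 := sD x hx
    have h2 := sD _ (shadow_add_code hD hx (sd_one hD))
    have h3 := wt_compl x
    rw [hP]
    apply List.prod_eq_zero
    simp only [List.mem_map, List.mem_range]
    refine ⟨(wt x - (4 * k + 10)) / 4, by omega, by omega⟩
  have hm := moments (shF C) (shF N) (4 * k + 3)
    (fun a h0 ha => shF_chi hC (fun hc => by have := dC a hc h0; omega))
    (fun a h0 ha => shF_chi hN (fun hc => by have := dN a hc h0; omega)) ws 0
    (by simp [ws, wt])
  have hc0 : ∀ x, chi (0 : Fin (24 * k + 20) → ZMod 2) x = 1 := by intro x; simp [chi]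
  simp only [hc0, one_mul] at hm
  change _ * ∑ x ∈ shF C, P x = _ * ∑ x ∈ shF N, P x at hm
  by_contra hcon
  push Not at hcon
  have hN0 : ∑ x ∈ shF N, P x = 0 :=
    Finset.sum_eq_zero fun x hx => hzero N hN sN x (mem_shF.1 hx) (hcon x (mem_shF.1 hx))
  obtain ⟨x₀, hx₀, hw₀⟩ := hex
  have hCp : 0 < ∑ x ∈ shF C, P x := by
    apply Finset.sum_pos'
    · intro x hx
      by_cases hw : wt x = 4 * k + 6
      · exact (hpos x hw).le
      · exact (hzero C hC sC x (mem_shF.1 hx) hw).ge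
    · exact ⟨x₀, mem_shF.2 hx₀, hpos x₀ hw₀⟩
  obtain ⟨y, hy⟩ := hne
  have hcard : 0 < #(shF N) := Finset.card_pos.2 ⟨y, mem_shF.2 hy⟩
  rw [hN0, mul_zero] at hm
  have : (0 : ℤ) < #(shF N) := by exact_mod_cast hcard
  have := mul_pos this hCp
  omega

lemma mem_neighbor {n : ℕ} {C : Submodule (ZMod 2) (Fin n → ZMod 2)} (h : IsSelfDual C)
    {t x : Fin n → ZMod 2} :
    x ∈ neighborCode C t ↔ (x ∈ C ∧ 4 ∣ wt x) ∨ (x + t ∈ C ∧ 4 ∣ wt (x + t)) := by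
  constructor
  · intro hx
    have z : (0 : Fin n → ZMod 2) ∈ C ∧ 4 ∣ wt (0 : Fin n → ZMod 2) := ⟨C.zero_mem, by simp [wt]⟩
    have ad : ∀ {x y : Fin n → ZMod 2}, (x ∈ C ∧ 4 ∣ wt x) → (y ∈ C ∧ 4 ∣ wt y) →
        (x + y ∈ C ∧ 4 ∣ wt (x + y)) := by
      intro x y hx hy
      have := even_add h hx.1 hy.1
      exact ⟨C.add_mem hx.1 hy.1, by omega⟩
    unfold neighborCode at hx
    induction hx using Submodule.span_induction with
    | mem x hx =>
      rcases hx with hx | hx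
      · exact Or.inl hx
      · right; rw [Set.mem_singleton_iff.1 hx, add_self2]; exact z
    | zero => exact Or.inl z
    | add x y _ _ hx hy =>
      rcases hx with hx | hx <;> rcases hy with hy | hy
      · exact Or.inl (ad hx hy)
      · right; rw [add_assoc]; exact ad hx hy
      · right; rw [add_right_comm]; exact ad hx hy
      · left
        have := ad hx hy
        have e : x + t + (y + t) = x + y := by
          rw [add_add_add_comm, add_self2, add_zero]
        rwa [e] at this
    | smul a x _ hx =>
      rcases zb a with rfl | rfl
      · rw [zero_smul]; exact Or.inl z
      · rwa [one_smul]
  · rintro (hx | hx)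
    · exact Submodule.subset_span (Or.inl hx)
    · have h1 : x + t ∈ neighborCode C t := Submodule.subset_span (Or.inl hx)
      have h2 : t ∈ neighborCode C t := Submodule.subset_span (Or.inr rfl)
      have := Submodule.add_mem _ h1 h2
      rwa [add_add_self2] at this

/-- Proposition 2.1(ii): the neighbors `N₁(C) = C₀ ∪ C₁` and `N₃(C) = C₀ ∪ C₃` of an
s-extremal (and extremal) singly even self-dual `[24k+20, 12k+10, 4k+4]` code are again
s-extremal singly even self-dual `[24k+20, 12k+10, 4k+4]` codes. -/
theorem sExtremal_neighbor_24k20 (k : ℕ)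
    (C : Submodule (ZMod 2) (Fin (24 * k + 20) → ZMod 2))
    (hse : IsSinglyEvenSelfDual C)
    (hdim : Module.finrank (ZMod 2) C = 12 * k + 10)
    (hd : minWt C = 4 * k + 4)
    (hshadow : minWtSet (shadow C) = 4 * k + 6)
    (t : Fin (24 * k + 20) → ZMod 2) (ht : t ∈ shadow C) :
    IsSinglyEvenSelfDual (neighborCode C t) ∧
    Module.finrank (ZMod 2) (neighborCode C t) = 12 * k + 10 ∧
    minWt (neighborCode C t) = 4 * k + 4 ∧
    minWtSet (shadow (neighborCode C t)) = 4 * k + 6 := by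
  have hC := hse.1
  have hdC : ∀ x ∈ C, x ≠ 0 → 4 * k + 4 ≤ wt x := fun x hx h0 => hd ▸ minWtSet_le hx h0
  obtain ⟨s₀, hs₀, -, hs₀w⟩ := minWtSet_att (S := shadow C) (by omega)
  rw [hshadow] at hs₀w
  have sC : ∀ x ∈ shadow C, 4 * k + 6 ≤ wt x ∧ wt x % 4 = 2 := by
    intro x hx
    have h0 : x ≠ 0 := by rintro rfl; exact (mem_shadow.1 hx).2 C.zero_mem
    have := minWtSet_le hx h0
    have := shadow_wt hC hx hs₀
    omega
  have tC : ∀ x, x + t ∈ C → x ∈ shadow C := by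
    intro x hx
    have := shadow_add_code hC ht hx
    rwa [add_comm t, add_add_self2] at this
  have tdot : ∀ y ∈ C, 4 ∣ wt y → t ⬝ᵥ y = 0 := (mem_shadow.1 ht).1
  have tt : t ⬝ᵥ t = 0 := by
    rw [← wt_cast, ZMod.natCast_eq_zero_iff]
    have := sC t ht
    omega
  set N := neighborCode C t with hNdef
  have mN : ∀ x, x ∈ N ↔ (x ∈ C ∧ 4 ∣ wt x) ∨ (x + t ∈ C ∧ 4 ∣ wt (x + t)) :=
    fun x => mem_neighbor hC
  have tN : t ∈ N := Submodule.subset_span (Or.inr rfl)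
  -- dichotomy for vectors orthogonal to the doubly even subcode
  have hN : IsSelfDual N := by
    apply Set.ext
    intro x
    constructor
    · intro hx y hy
      change x ⬝ᵥ y = 0
      have hcc : ∀ a b : Fin (24 * k + 20) → ZMod 2, a ∈ C ∧ 4 ∣ wt a → b ∈ C ∧ 4 ∣ wt b →
          a ⬝ᵥ b = 0 := fun a b ha hb => sd_dot hC ha.1 hb.1
      have hct : ∀ a : Fin (24 * k + 20) → ZMod 2, a ∈ C ∧ 4 ∣ wt a → a ⬝ᵥ t = 0 :=
        fun a ha => by rw [dotProduct_comm]; exact tdot a ha.1 ha.2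
      have htc : ∀ a : Fin (24 * k + 20) → ZMod 2, a ∈ C ∧ 4 ∣ wt a → t ⬝ᵥ a = 0 :=
        fun a ha => tdot a ha.1 ha.2
      rcases (mN x).1 hx with h1 | h1 <;> rcases (mN y).1 hy with h2 | h2
      · exact hcc _ _ h1 h2
      · rw [← add_add_self2 y t, dotProduct_add, hcc _ _ h1 h2, hct _ h1, add_zero]
      · rw [← add_add_self2 x t, add_dotProduct, hcc _ _ h1 h2, htc _ h2, add_zero]
      · have e := hcc _ _ h1 h2
        have e1 := hct _ h1
        have e2 := htc _ h2
        rw [add_dotProduct, tt, add_zero] at e1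
        rw [dotProduct_add, tt, add_zero] at e2
        rw [add_dotProduct, dotProduct_add, dotProduct_add, e1, e2, tt] at e
        simpa using e
    · intro hx
      have hx' : ∀ y ∈ N, x ⬝ᵥ y = 0 := hx
      have hxt := hx' t tN
      apply (mN x).2
      by_cases hxC : x ∈ C
      · left
        refine ⟨hxC, ?_⟩
        by_contra h4
        have := shadow_dot hC ht hxC h4
        rw [dotProduct_comm, hxt] at this
        exact zero_ne_one this
      · right
        have hxS : x ∈ shadow C :=
          mem_shadow.2 ⟨fun y hy h4 => hx' y ((mN y).2 (Or.inl ⟨hy, h4⟩)), hxC⟩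
        have hc := shadow_add hC hxS ht
        refine ⟨hc, ?_⟩
        by_contra h4
        have := shadow_dot hC ht hc h4
        rw [dotProduct_comm, add_dotProduct, hxt, tt, add_zero] at this
        exact zero_ne_one this
  have dN : ∀ x ∈ N, x ≠ 0 → 4 * k + 4 ≤ wt x := by
    intro x hx h0
    rcases (mN x).1 hx with h1 | h1
    · exact hdC x h1.1 h0
    · have := sC x (tC x h1.1)
      omega
  have sub : ∀ y ∈ C, 4 ∣ wt y → y ∈ N := fun y hy h4 => (mN y).2 (Or.inl ⟨hy, h4⟩)
  have sN : ∀ x ∈ shadow N, 4 * k + 6 ≤ wt x ∧ wt x % 4 = 2 := by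
    intro x hx
    rw [mem_shadow] at hx
    by_cases hxC : x ∈ C
    · have h4 : ¬ 4 ∣ wt x := fun h4 => hx.2 (sub x hxC h4)
      have h0 : x ≠ 0 := by rintro rfl; exact hx.2 N.zero_mem
      have := hdC x hxC h0
      have := sd_even hC hxC
      omega
    · exact sC x (mem_shadow.2 ⟨fun y hy h4 => hx.1 y (sub y hy h4) h4, hxC⟩)
  have hneN : ∃ x, x ∈ shadow N := by
    obtain ⟨u, hu, hu4⟩ := hse.2
    refine ⟨u, mem_shadow.2 ⟨fun y hy h4 => ?_, fun huN => ?_⟩⟩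
    · rcases (mN y).1 hy with h1 | h1
      · exact sd_dot hC hu h1.1
      · have := sC y (tC y h1.1)
        omega
    · rcases (mN u).1 huN with h1 | h1
      · exact hu4 h1.2
      · exact (mem_shadow.1 (tC u h1.1)).2 hu
  refine ⟨⟨hN, t, tN, ?_⟩, ?_, ?_, ?_⟩
  · have := sC t ht
    omega
  · have := sd_finrank hN
    omega
  · obtain ⟨c, hc, hc0, hcw⟩ := minWtSet_att (S := (C : Set (Fin (24 * k + 20) → ZMod 2)))
      (by change minWt C ≠ 0; omega)
    change wt c = minWt C at hcw
    rw [hd] at hcw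
    exact minWtSet_eq (S := (N : Set _)) (sub c hc (by omega)) hc0 hcw dN
  · obtain ⟨x, hx, hxw⟩ := exists_min hC hN hdC dN sC sN ⟨s₀, hs₀, hs₀w⟩ hneN
    refine minWtSet_eq hx ?_ hxw (fun y hy _ => (sN y hy).1)
    rintro rfl
    exact (mem_shadow.1 hx).2 N.zero_mem
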